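/- Let h > 0, let L : ℝⁿ × ℝⁿ → ℝ be C² with Legendre transform 𝔽L(q,v) = (q, D₂L(q,v)) a C¹ diffeomorphism of ℝⁿ × ℝⁿ, set H(q,p) = p·v − L(q,v) with (q,v) = (𝔽L)⁻¹(q,p) and f_H(q,p,u) = f_L((𝔽L)⁻¹(q,p), u) for a continuous f_L : ℝⁿ × ℝⁿ × ℝᵐ → ℝⁿ, and let u : [0,h] → ℝᵐ be continuous. Suppose q : [0,h] → ℝⁿ is a C² solution of the forced Euler–Lagrange equations for (L, f_L, u), belonging to a C² family 𝒬 of such boundary-value solutions as in the definition of the exact discrete Lagrangian, with q(0) = q₀ and q(h) = q₁. Define p₀ := −D₁L_d^E(q₀,q₁) − f_d^{E−}(q₀,q₁) and p₁ := D₂L_d^E(q₀,q₁) + f_d^{E+}(q₀,q₁). Then the curve t ↦ (q(t), p(t)) with p(t) = D₂L(q(t),q̇(t)) solves the forced Hamilton equations q̇ = ∇_p H(q,p), ṗ = −∇_q H(q,p) + f_H(q,p,u) on [0,h] with (q(0),p(0)) = (q₀,p₀) and (q(h),p(h)) = (q₁,p₁); that is, the exact forced discrete Hamiltonian map (q₀,p₀)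 ↦ (q₁,p₁) equals the time-h forced Hamiltonian flow. -/

import Mathlib

open scoped RealInnerProductSpace

noncomputable section

abbrev Evec (n : ℕ) := EuclideanSpace ℝ (Fin n)

open MeasureTheory Set in
theorem aux_param {X : Type*} [NormedAddCommGroup X] [NormedSpace ℝ X] [FiniteDimensional ℝ X]
    (F : X × ℝ → ℝ) (hF : ContDiff ℝ 1 F) (h : ℝ) (x0 : X) :
    HasFDerivAt (fun x => ∫ t in (0:ℝ)..h, F (x, t))
      (∫ t in (0:ℝ)..h, (fderiv ℝ F (x0, t)).comp (ContinuousLinearMap.inl ℝ X ℝ)) x0 := by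
  have : ProperSpace X := FiniteDimensional.proper ℝ X
  have hc : Continuous (fun w : X × ℝ => (fderiv ℝ F w).comp (ContinuousLinearMap.inl ℝ X ℝ)) :=
    (hF.continuous_fderiv (by norm_num)).clm_comp continuous_const
  have hK : IsCompact (Metric.closedBall x0 1 ×ˢ uIcc (0:ℝ) h) :=
    (isCompact_closedBall x0 1).prod isCompact_uIcc
  obtain ⟨C, hC⟩ := hK.exists_bound_of_continuousOn hc.continuousOn
  refine intervalIntegral.hasFDerivAt_integral_of_dominated_of_fderiv_le
    (F := fun x t => F (x, t))
    (F' := fun x t => (fderiv ℝ F (x, t)).comp (ContinuousLinearMap.inl ℝ X ℝ))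
    (bound := fun _ => C) (Metric.closedBall_mem_nhds x0 one_pos) ?_ ?_ ?_ ?_ ?_ ?_
  · refine Filter.Eventually.of_forall fun x => ?_
    exact (hF.continuous.comp (by fun_prop : Continuous fun t : ℝ => (x, t))).aestronglyMeasurable
  · exact (hF.continuous.comp (by fun_prop : Continuous fun t : ℝ => (x0, t))).intervalIntegrable _ _
  · exact (hc.comp (by fun_prop : Continuous fun t : ℝ => (x0, t))).aestronglyMeasurable
  · refine Filter.Eventually.of_forall fun t ht x hx => ?_
    exact hC (x, t) ⟨hx, uIoc_subset_uIcc ht⟩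
  · exact intervalIntegrable_const
  · refine Filter.Eventually.of_forall fun t ht x hx => ?_
    have h1 : HasFDerivAt F (fderiv ℝ F (x, t)) (x, t) :=
      (hF.differentiable (by norm_num) _).hasFDerivAt
    exact h1.comp x (hasFDerivAt_prodMk_left (𝕜 := ℝ) x t)

theorem aux_grad_fst {n : ℕ} (L : Evec n × Evec n → ℝ) (x : Evec n × Evec n)
    (hL : DifferentiableAt ℝ L x) (w : Evec n) :
    ⟪gradient (fun y => L (y, x.2)) x.1, w⟫ = fderiv ℝ L x (w, 0) := by
  rw [inner_gradient_left]
  have h1 : HasFDerivAt L (fderiv ℝ L x) (x.1, x.2) := hL.hasFDerivAt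
  have := (h1.comp x.1 (hasFDerivAt_prodMk_left (𝕜 := ℝ) x.1 x.2)).fderiv
  change fderiv ℝ (fun y => L (y, x.2)) x.1 = _ at this
  rw [this]; simp

theorem aux_grad_snd {n : ℕ} (L : Evec n × Evec n → ℝ) (x : Evec n × Evec n)
    (hL : DifferentiableAt ℝ L x) (w : Evec n) :
    ⟪gradient (fun y => L (x.1, y)) x.2, w⟫ = fderiv ℝ L x (0, w) := by
  rw [inner_gradient_left]
  have h1 : HasFDerivAt L (fderiv ℝ L x) (x.1, x.2) := hL.hasFDerivAt
  have := (h1.comp x.2 (hasFDerivAt_prodMk_right (𝕜 := ℝ) x.1 x.2)).fderiv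
  change fderiv ℝ (fun y => L (x.1, y)) x.2 = _ at this
  rw [this]; simp

theorem aux_H {n : ℕ} 
    (L : Evec n × Evec n → ℝ) (hL : ContDiff ℝ 2 L)
    (FL : (Evec n × Evec n) ≃ (Evec n × Evec n))
    (hFL : ∀ x : Evec n × Evec n, FL x = (x.1, gradient (fun v => L (x.1, v)) x.2))
    (hFLinvdiff : ContDiff ℝ 1 (⇑FL.symm))
    (H : Evec n × Evec n → ℝ)
    (hH : ∀ x : Evec n × Evec n, H x = ⟪x.2, (FL.symm x).2⟫ - L (FL.symm x))
    (x : Evec n × Evec n) :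
    DifferentiableAt ℝ H (FL x) ∧ ∀ d : Evec n × Evec n, fderiv ℝ H (FL x) d =
      ⟪d.2, x.2⟫ - fderiv ℝ L x (d.1, 0) := by
  have hfst : ∀ y, (FL.symm y).1 = y.1 := fun y => by
    have := hFL (FL.symm y)
    rw [Equiv.apply_symm_apply] at this
    exact (congrArg Prod.fst this).symm
  set S := fderiv ℝ (⇑FL.symm) (FL x) with hS
  have hSd : HasFDerivAt (⇑FL.symm) S (FL x) :=
    (hFLinvdiff.differentiable (by norm_num) _).hasFDerivAt
  have hS1 : ∀ d, (S d).1 = d.1 := by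
    intro d
    have h1 : HasFDerivAt (fun y => (FL.symm y).1)
      ((ContinuousLinearMap.fst ℝ _ _).comp S) (FL x) := hSd.fst
    have h2 : (fun y => (FL.symm y).1) = Prod.fst := funext hfst
    rw [h2] at h1
    have := h1.unique hasFDerivAt_fst
    simpa using congrArg (fun T => T d) this
  have hLd : HasFDerivAt L (fderiv ℝ L x) (FL.symm (FL x)) := by
    rw [Equiv.symm_apply_apply]
    exact (hL.differentiable (by norm_num) _).hasFDerivAt
  have hHd := ((hasFDerivAt_snd (𝕜 := ℝ) (p := FL x)).inner ℝ hSd.snd).sub (hLd.comp _ hSd)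
  have hHe : H = (fun y => ⟪y.2, (FL.symm y).2⟫) - L ∘ ⇑FL.symm := funext hH
  have hHd' : HasFDerivAt H _ (FL x) := hHe ▸ hHd
  refine ⟨hHd'.differentiableAt, fun d => ?_⟩
  rw [hHd'.fderiv]
  have e1 : S d = (d.1, 0) + (0, (S d).2) := by
    ext1 <;> simp [hS1]
  have e2 : fderiv ℝ L x (S d) = fderiv ℝ L x (d.1, 0) + ⟪(FL x).2, (S d).2⟫ := by
    rw [e1, map_add, hFL x, ← aux_grad_snd L x (hL.differentiable (by norm_num) _)]
    simp
  simp [fderivInnerCLM_apply, e2]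
  ring

theorem aux_LdE {n : ℕ} (h : ℝ) (hh : 0 < h)
    (L : Evec n × Evec n → ℝ) (hL : ContDiff ℝ 2 L)
    (Qf : (Evec n × Evec n) × ℝ → Evec n) (hQf : ContDiff ℝ 2 Qf)
    (LdE : Evec n × Evec n → ℝ)
    (hLdE : ∀ x, LdE x = ∫ t in (0:ℝ)..h, L (Qf (x, t), deriv (fun τ => Qf (x, τ)) t))
    (x0 : Evec n × Evec n) (p : ℝ → Evec n) (hp : ContDiff ℝ 1 p) (g : ℝ → Evec n)
    (hg : Continuous g)
    (hpdef : ∀ t, p t = gradient (fun v => L (Qf (x0, t), v)) (deriv (fun τ => Qf (x0, τ)) t))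
    (hEL : ∀ t ∈ Set.Icc (0:ℝ) h,
      gradient (fun y => L (y, deriv (fun τ => Qf (x0, τ)) t)) (Qf (x0, t))
        - deriv p t + g t = 0) :
    DifferentiableAt ℝ LdE x0 ∧ ∀ d : Evec n × Evec n, fderiv ℝ LdE x0 d =
      ⟪p h, fderiv ℝ Qf (x0, h) (d, 0)⟫ - ⟪p 0, fderiv ℝ Qf (x0, 0) (d, 0)⟫
      - ∫ t in (0:ℝ)..h, ⟪g t, fderiv ℝ Qf (x0, t) (d, 0)⟫ := by
  have hQd : ∀ w, HasFDerivAt Qf (fderiv ℝ Qf w) w := fun w =>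
    (hQf.differentiable (by norm_num) _).hasFDerivAt
  have hdQ : ContDiff ℝ 1 (fderiv ℝ Qf) := hQf.fderiv_right (by norm_num)
  have hder : ∀ x t, deriv (fun τ => Qf (x, τ)) t = fderiv ℝ Qf (x, t) (0, 1) := by
    intro x t
    have := ((hQd (x, t)).comp t (hasFDerivAt_prodMk_right (𝕜 := ℝ) x t)).hasDerivAt.deriv
    change deriv (fun τ => Qf (x, τ)) t = _ at this
    rw [this]; simp
  simp only [hder] at hLdE hpdef hEL
  set Z : (Evec n × Evec n) × ℝ → Evec n := fun w => fderiv ℝ Qf w (0, 1) with hZ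
  have hZc : ContDiff ℝ 1 Z := hdQ.clm_apply contDiff_const
  have hQ1 : ContDiff ℝ 1 Qf := hQf.of_le (by norm_num)
  have hL1 : ContDiff ℝ 1 L := hL.of_le (by norm_num)
  have hΦ : ContDiff ℝ 1 (fun w => L (Qf w, Z w)) := hL1.comp (hQ1.prodMk hZc)
  have hmain := aux_param _ hΦ h x0
  have hLe : LdE = fun x => ∫ t in (0:ℝ)..h, L (Qf (x, t), Z (x, t)) := funext hLdE
  rw [← hLe] at hmain
  refine ⟨hmain.differentiableAt, fun d => ?_⟩
  rw [hmain.fderiv]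
  have hpath : Continuous fun t : ℝ => (x0, t) := by fun_prop
  have hcI : Continuous fun t : ℝ => (fderiv ℝ (fun w => L (Qf w, Z w)) (x0, t)).comp
      (ContinuousLinearMap.inl ℝ (Evec n × Evec n) ℝ) :=
    ((hΦ.continuous_fderiv (by norm_num)).comp hpath).clm_comp continuous_const
  rw [ContinuousLinearMap.intervalIntegral_apply (hcI.intervalIntegrable _ _)]
  -- eta
  set η : ℝ → Evec n := fun t => fderiv ℝ Qf (x0, t) (d, 0) with hη
  have hηc : ContDiff ℝ 1 η :=
    (hdQ.comp (contDiff_const.prodMk contDiff_id)).clm_apply contDiff_const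
  have hηd : ∀ t, HasDerivAt η (fderiv ℝ (fderiv ℝ Qf) (x0, t) (d, 0) (0, 1)) t := by
    intro t
    have h1 : HasFDerivAt (fderiv ℝ Qf) (fderiv ℝ (fderiv ℝ Qf) (x0, t)) (x0, t) :=
      (hdQ.differentiable (by norm_num) _).hasFDerivAt
    have h2 := (h1.comp t (hasFDerivAt_prodMk_right (𝕜 := ℝ) x0 t)).hasDerivAt.clm_apply
      (hasDerivAt_const t ((d, 0) : (Evec n × Evec n) × ℝ))
    have hs : IsSymmSndFDerivAt ℝ Qf (x0, t) := hQf.contDiffAt.isSymmSndFDerivAt (by simp)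
    have h3 := hs (d, 0) (0, 1)
    rw [h3]
    simpa using h2
  have hcI2 : Continuous fun t : ℝ => ⟪g t, η t⟫ := hg.inner hηc.continuous
  have hpη : ∀ t, HasDerivAt (fun t => ⟪p t, η t⟫)
      (⟪p t, fderiv ℝ (fderiv ℝ Qf) (x0, t) (d, 0) (0, 1)⟫ + ⟪deriv p t, η t⟫) t := fun t =>
    (hp.differentiable (by norm_num) t).hasDerivAt.inner ℝ (hηd t)
  have hftc : ∫ t in (0:ℝ)..h, deriv (fun t => ⟪p t, η t⟫) t = ⟪p h, η h⟫ - ⟪p 0, η 0⟫ := by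
    refine intervalIntegral.integral_deriv_eq_sub (fun t _ => (hpη t).differentiableAt) ?_
    exact ((hp.inner ℝ hηc).continuous_deriv (by norm_num)).intervalIntegrable _ _
  have hcD : IntervalIntegrable (deriv (fun t => ⟪p t, η t⟫)) MeasureTheory.volume 0 h :=
    ((hp.inner ℝ hηc).continuous_deriv (by norm_num)).intervalIntegrable _ _
  rw [← hftc, ← intervalIntegral.integral_sub hcD (hcI2.intervalIntegrable _ _)]
  refine intervalIntegral.integral_congr fun t ht => ?_
  rw [Set.uIcc_of_le hh.le] at ht
  have hZd : HasFDerivAt Z ((fderiv ℝ (fderiv ℝ Qf) (x0, t)).flip (0, 1)) (x0, t) := by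
    have h1 : HasFDerivAt (fderiv ℝ Qf) (fderiv ℝ (fderiv ℝ Qf) (x0, t)) (x0, t) :=
      (hdQ.differentiable (by norm_num) _).hasFDerivAt
    have := h1.clm_apply (hasFDerivAt_const ((0, 1) : (Evec n × Evec n) × ℝ) (x0, t))
    simpa using this
  have hLd : HasFDerivAt L (fderiv ℝ L (Qf (x0, t), Z (x0, t))) (Qf (x0, t), Z (x0, t)) :=
    (hL.differentiable (by norm_num) _).hasFDerivAt
  have hΦd := (hLd.comp (x0, t) ((hQd (x0, t)).prodMk hZd)).fderiv
  change fderiv ℝ (fun w => L (Qf w, Z w)) (x0, t) = _ at hΦd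
  have e := hEL t ht
  have e' : deriv p t = gradient (fun y => L (y, Z (x0, t))) (Qf (x0, t)) + g t := by
    rw [← sub_eq_zero, ← neg_eq_zero, ← e]; abel
  have g1 := aux_grad_fst L (Qf (x0, t), Z (x0, t)) hLd.differentiableAt (η t)
  have g2 := aux_grad_snd L (Qf (x0, t), Z (x0, t)) hLd.differentiableAt
    (fderiv ℝ (fderiv ℝ Qf) (x0, t) (d, 0) (0, 1))
  simp only at g1 g2
  simp only [(hpη t).deriv, hΦd]
  rw [e', inner_add_left, g1, hpdef t, g2]
  simp only [ContinuousLinearMap.comp_apply, ContinuousLinearMap.inl_apply,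
    ContinuousLinearMap.prod_apply, ContinuousLinearMap.flip_apply]
  have : ∀ a b : Evec n, ((a, b) : Evec n × Evec n) = (a, 0) + (0, b) := by simp
  rw [this (fderiv ℝ Qf (x0, t) (d, 0)), map_add]
  ring

/-- The exact forced discrete Hamiltonian map `(q₀,p₀) ↦ (q₁,p₁)` generated by
the exact discrete Lagrangian and exact discrete forces equals the time-`h`
forced Hamiltonian flow. -/
theorem stmt_9 {n m : ℕ} (h : ℝ) (hh : 0 < h)
    (L : Evec n × Evec n → ℝ) (hL : ContDiff ℝ 2 L)
    (FL : (Evec n × Evec n) ≃ (Evec n × Evec n))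
    (hFL : ∀ x : Evec n × Evec n, FL x = (x.1, gradient (fun v => L (x.1, v)) x.2))
    (hFLdiff : ContDiff ℝ 1 (⇑FL)) (hFLinvdiff : ContDiff ℝ 1 (⇑FL.symm))
    (H : Evec n × Evec n → ℝ)
    (hH : ∀ x : Evec n × Evec n, H x = ⟪x.2, (FL.symm x).2⟫ - L (FL.symm x))
    (fL : Evec n × Evec n × Evec m → Evec n) (hfL : Continuous fL)
    (fH : Evec n × Evec n × Evec m → Evec n)
    (hfH : ∀ (x : Evec n × Evec n) (w : Evec m),
      fH (x.1, x.2, w) = fL ((FL.symm x).1, (FL.symm x).2, w))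
    (u : ℝ → Evec m) (hu : Continuous u)
    (V : Set (Evec n × Evec n)) (hV : IsOpen V)
    (Qf : (Evec n × Evec n) × ℝ → Evec n) (hQf : ContDiff ℝ 2 Qf)
    (hbd0 : ∀ x ∈ V, Qf (x, 0) = x.1)
    (hbdh : ∀ x ∈ V, Qf (x, h) = x.2)
    (hEL : ∀ x ∈ V, ∀ t ∈ Set.Icc (0:ℝ) h,
      gradient (fun y => L (y, deriv (fun τ => Qf (x, τ)) t)) (Qf (x, t))
        - deriv (fun σ => gradient (fun v => L (Qf (x, σ), v))
            (deriv (fun τ => Qf (x, τ)) σ)) t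
        + fL (Qf (x, t), deriv (fun τ => Qf (x, τ)) t, u t) = 0)
    (LdE : Evec n × Evec n → ℝ)
    (hLdE : ∀ x, LdE x = ∫ t in (0:ℝ)..h, L (Qf (x, t), deriv (fun τ => Qf (x, τ)) t))
    (fdEm : Evec n × Evec n → Evec n)
    (hfdEm : ∀ x : Evec n × Evec n, fdEm x = ∫ t in (0:ℝ)..h,
      (ContinuousLinearMap.adjoint (fderiv ℝ (fun a => Qf ((a, x.2), t)) x.1))
        (fL (Qf (x, t), deriv (fun τ => Qf (x, τ)) t, u t)))
    (fdEp : Evec n × Evec n → Evec n)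
    (hfdEp : ∀ x : Evec n × Evec n, fdEp x = ∫ t in (0:ℝ)..h,
      (ContinuousLinearMap.adjoint (fderiv ℝ (fun b => Qf ((x.1, b), t)) x.2))
        (fL (Qf (x, t), deriv (fun τ => Qf (x, τ)) t, u t)))
    (x0 : Evec n × Evec n) (hx0 : x0 ∈ V)
    (q : ℝ → Evec n) (hqdef : q = fun t => Qf (x0, t))
    (p : ℝ → Evec n)
    (hpdef : ∀ t, p t = gradient (fun v => L (q t, v)) (deriv q t))
    (pa pb : Evec n)
    (hpa : pa = -gradient (fun a => LdE (a, x0.2)) x0.1 - fdEm x0)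
    (hpb : pb = gradient (fun b => LdE (x0.1, b)) x0.2 + fdEp x0) :
    (∀ t ∈ Set.Icc (0:ℝ) h,
      deriv q t = gradient (fun p' => H (q t, p')) (p t)
      ∧ deriv p t = -gradient (fun q' => H (q', p t)) (q t) + fH (q t, p t, u t))
    ∧ q 0 = x0.1 ∧ p 0 = pa ∧ q h = x0.2 ∧ p h = pb := by
  have hQd : ∀ w, HasFDerivAt Qf (fderiv ℝ Qf w) w := fun w =>
    (hQf.differentiable (by norm_num) _).hasFDerivAt
  have hqc : ContDiff ℝ 2 q := by
    rw [hqdef]; exact hQf.comp (contDiff_const.prodMk contDiff_id)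
  have hqdc : ContDiff ℝ 1 (deriv q) := by
    have : ContDiff ℝ (1 + 1) q := by simpa [one_add_one_eq_two] using hqc
    exact (contDiff_succ_iff_deriv.1 this).2.2
  have hpFL : ∀ t, FL (q t, deriv q t) = (q t, p t) := fun t => by
    rw [hFL, hpdef]
  have hpc : ContDiff ℝ 1 p := by
    have : p = fun t => (FL (q t, deriv q t)).2 := by
      funext t; rw [hpFL]
    rw [this]
    exact (hFLdiff.comp ((hqc.of_le (by norm_num)).prodMk hqdc)).snd
  have hpe : p = fun t => gradient (fun v => L (q t, v)) (deriv q t) := funext hpdef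
  have hEL0 : ∀ t ∈ Set.Icc (0:ℝ) h,
      gradient (fun y => L (y, deriv q t)) (q t) - deriv p t + fL (q t, deriv q t, u t) = 0 := by
    intro t ht
    rw [hpe, hqdef]
    exact hEL x0 hx0 t ht
  have hgc : Continuous fun t => fL (q t, deriv q t, u t) :=
    hfL.comp (hqc.continuous.prodMk (hqdc.continuous.prodMk hu))
  have hLdd := aux_LdE h hh L hL Qf hQf LdE hLdE x0 p hpc (fun t => fL (q t, deriv q t, u t)) hgc
    (by intro t; rw [hpdef, hqdef]) (by
      intro t ht
      have := hEL0 t ht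
      rw [hqdef] at this ⊢
      exact this)
  obtain ⟨hLdiff, hLd⟩ := hLdd
  have hη0 : ∀ d, fderiv ℝ Qf (x0, 0) (d, 0) = d.1 := by
    intro d
    have h1 := (hQd (x0, 0)).comp x0 (hasFDerivAt_prodMk_left (𝕜 := ℝ) x0 (0:ℝ))
    have h2 : (Qf ∘ fun x => (x, (0:ℝ))) =ᶠ[nhds x0] Prod.fst := by
      filter_upwards [hV.mem_nhds hx0] with x hx using hbd0 x hx
    have := h1.unique (hasFDerivAt_fst.congr_of_eventuallyEq h2)
    simpa using congrArg (fun T => T d) this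
  have hηh : ∀ d, fderiv ℝ Qf (x0, h) (d, 0) = d.2 := by
    intro d
    have h1 := (hQd (x0, h)).comp x0 (hasFDerivAt_prodMk_left (𝕜 := ℝ) x0 h)
    have h2 : (Qf ∘ fun x => (x, h)) =ᶠ[nhds x0] Prod.snd := by
      filter_upwards [hV.mem_nhds hx0] with x hx using hbdh x hx
    have := h1.unique (hasFDerivAt_snd.congr_of_eventuallyEq h2)
    simpa using congrArg (fun T => T d) this
  have hdQc : Continuous fun t : ℝ => fderiv ℝ Qf (x0, t) :=
    (hQf.continuous_fderiv (by norm_num)).comp (by fun_prop : Continuous fun t : ℝ => (x0, t))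
  have hA : ∀ t, fderiv ℝ (fun a => Qf ((a, x0.2), t)) x0.1 = (fderiv ℝ Qf (x0, t)).comp
      ((ContinuousLinearMap.inl ℝ _ ℝ).comp (ContinuousLinearMap.inl ℝ (Evec n) (Evec n))) := by
    intro t
    exact ((hQd (x0, t)).comp x0.1 ((hasFDerivAt_prodMk_left (𝕜 := ℝ) x0 t).comp x0.1
      (hasFDerivAt_prodMk_left (𝕜 := ℝ) x0.1 x0.2))).fderiv
  have hB : ∀ t, fderiv ℝ (fun b => Qf ((x0.1, b), t)) x0.2 = (fderiv ℝ Qf (x0, t)).comp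
      ((ContinuousLinearMap.inl ℝ _ ℝ).comp (ContinuousLinearMap.inr ℝ (Evec n) (Evec n))) := by
    intro t
    exact ((hQd (x0, t)).comp x0.2 ((hasFDerivAt_prodMk_left (𝕜 := ℝ) x0 t).comp x0.2
      (hasFDerivAt_prodMk_right (𝕜 := ℝ) x0.1 x0.2))).fderiv
  have hderx : ∀ t, fL (Qf (x0, t), deriv (fun τ => Qf (x0, τ)) t, u t)
      = fL (q t, deriv q t, u t) := by intro t; rw [hqdef]
  have hfm : ∀ w, ⟪fdEm x0, w⟫ = ∫ t in (0:ℝ)..h,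
      ⟪fL (q t, deriv q t, u t), fderiv ℝ Qf (x0, t) ((w, 0), 0)⟫ := by
    intro w
    rw [hfdEm]
    simp only [hA, hderx]
    have hc : Continuous fun t => (ContinuousLinearMap.adjoint ((fderiv ℝ Qf (x0, t)).comp
      ((ContinuousLinearMap.inl ℝ _ ℝ).comp (ContinuousLinearMap.inl ℝ (Evec n) (Evec n)))))
      (fL (q t, deriv q t, u t)) :=
      (ContinuousLinearMap.adjoint.continuous.comp (hdQc.clm_comp continuous_const)).clm_apply hgc
    rw [real_inner_comm]
    have := (innerSL ℝ w).intervalIntegral_comp_comm (hc.intervalIntegrable (μ := MeasureTheory.volume) 0 h)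
    rw [← innerSL_apply_apply (𝕜 := ℝ), ← this]
    refine intervalIntegral.integral_congr fun t _ => ?_
    simp only [innerSL_apply_apply, ContinuousLinearMap.adjoint_inner_right]
    rw [real_inner_comm]
    simp
  have hfp : ∀ w, ⟪fdEp x0, w⟫ = ∫ t in (0:ℝ)..h,
      ⟪fL (q t, deriv q t, u t), fderiv ℝ Qf (x0, t) ((0, w), 0)⟫ := by
    intro w
    rw [hfdEp]
    simp only [hB, hderx]
    have hc : Continuous fun t => (ContinuousLinearMap.adjoint ((fderiv ℝ Qf (x0, t)).comp
      ((ContinuousLinearMap.inl ℝ _ ℝ).comp (ContinuousLinearMap.inr ℝ (Evec n) (Evec n)))))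
      (fL (q t, deriv q t, u t)) :=
      (ContinuousLinearMap.adjoint.continuous.comp (hdQc.clm_comp continuous_const)).clm_apply hgc
    rw [real_inner_comm]
    have := (innerSL ℝ w).intervalIntegral_comp_comm (hc.intervalIntegrable (μ := MeasureTheory.volume) 0 h)
    rw [← innerSL_apply_apply (𝕜 := ℝ), ← this]
    refine intervalIntegral.integral_congr fun t _ => ?_
    simp only [innerSL_apply_apply, ContinuousLinearMap.adjoint_inner_right]
    rw [real_inner_comm]
    simp
  refine ⟨fun t ht => ?_, ?_, ?_, ?_, ?_⟩
  · obtain ⟨hHd, hHf⟩ := aux_H L hL FL hFL hFLinvdiff H hH (q t, deriv q t)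
    rw [hpFL] at hHd hHf
    have hs : FL.symm (q t, p t) = (q t, deriv q t) := by
      rw [← hpFL, Equiv.symm_apply_apply]
    constructor
    · refine ext_inner_right ℝ fun w => ?_
      have := aux_grad_snd H (q t, p t) hHd w
      simp only at this
      rw [this, hHf, real_inner_comm]
      have hz : fderiv ℝ L (q t, deriv q t) (0, 0) = 0 := map_zero _
      simp only [hz, sub_zero]
    · have hg : gradient (fun q' => H (q', p t)) (q t)
          = - gradient (fun y => L (y, deriv q t)) (q t) := by
        refine ext_inner_right ℝ fun w => ?_
        have h1 := aux_grad_fst H (q t, p t) hHd w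
        have h2 := aux_grad_fst L (q t, deriv q t) (hL.differentiable (by norm_num) _) w
        simp only at h1 h2
        rw [h1, hHf, inner_neg_left, h2]
        simp
      have hf := hfH (q t, p t) (u t)
      simp only [hs] at hf
      rw [hg, hf, neg_neg, ← sub_eq_zero, ← neg_eq_zero, ← hEL0 t ht]
      abel
  · rw [hqdef]; exact hbd0 x0 hx0
  · rw [hpa]
    refine ext_inner_right ℝ fun w => ?_
    rw [inner_sub_left, inner_neg_left, aux_grad_fst LdE x0 hLdiff, hLd, hfm, hη0, hηh]
    simp
  · rw [hqdef]; exact hbdh x0 hx0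
  · rw [hpb]
    refine ext_inner_right ℝ fun w => ?_
    rw [inner_add_left, aux_grad_snd LdE x0 hLdiff, hLd, hfp, hη0, hηh]
    simp
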